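/- arXiv:1703.00891 — 2 statements merged into one kernel-verified Lean document; each statement's English description precedes it below -/
import Mathlib

section
/- Let d ≥ 1, ν > 1, and let γ ∈ ℝ satisfy γ ≤ -d/2. Set Γ := d/2 - 4/(ν-1). Let φ₀ be a Schwartz function on ℝ^d for which there exist κ > -γ - d/2, C₀ > 0 and r₀ > 0 such that |φ̂₀(ξ)| ≤ C₀ |ξ|^κ for all |ξ| ≤ r₀. Then there exists C > 0 such that for all λ, δ with 0 < λ ≤ δ ≤ 1, the function g(x) := λ^{-4/(ν-1)} φ₀(λ^{-1} δ x) satisfies ‖g‖_{H^γ} ≤ C λ^{Γ-γ} δ^{γ - d/2}. -/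
open MeasureTheory Real Complex
open scoped FourierTransform ENNReal SchwartzMap

/-- The Sobolev norm `‖f‖_{H^γ} = (∫ (1+|ξ|²)^γ |f̂(ξ)|² dξ)^{1/2}`, valued in `[0,∞]`. -/
noncomputable def sobNorm {d : ℕ} (γ : ℝ) (f : EuclideanSpace ℝ (Fin d) → ℂ) : ℝ≥0∞ :=
  (∫⁻ ξ : EuclideanSpace ℝ (Fin d),
      ENNReal.ofReal ((1 + ‖ξ‖ ^ 2) ^ γ) * (‖𝓕 f ξ‖₊ : ℝ≥0∞) ^ (2 : ℝ)) ^ ((1 : ℝ) / 2)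

lemma fourier_scale {d : ℕ} (c a : ℝ) (ha : 0 < a) (f : EuclideanSpace ℝ (Fin d) → ℂ)
    (ξ : EuclideanSpace ℝ (Fin d)) :
    𝓕 (fun x => c • f (a • x)) ξ = (c * (a ^ d)⁻¹) • 𝓕 f (a⁻¹ • ξ) := by
  rw [Real.fourier_eq, Real.fourier_eq]
  have h := Measure.integral_comp_smul_of_nonneg (volume : Measure (EuclideanSpace ℝ (Fin d)))
    (fun v => 𝐞 (-(inner ℝ v (a⁻¹ • ξ))) • f v) a (hR := ha.le)
  rw [finrank_euclideanSpace_fin] at h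
  rw [mul_smul, ← h, ← integral_smul]
  congr 1
  ext v
  have : inner ℝ (a • v) (a⁻¹ • ξ) = inner ℝ v ξ := by
    rw [real_inner_smul_left, real_inner_smul_right, ← mul_assoc, mul_inv_cancel₀ ha.ne', one_mul]
  rw [this, smul_comm]

lemma integrable_F (d : ℕ) (hd : 1 ≤ d) (γ : ℝ) (hγ : γ ≤ -(d : ℝ) / 2)
    (φ₀ : 𝓢(EuclideanSpace ℝ (Fin d), ℂ))
    (κ C₀ r₀ : ℝ) (hκ : -γ - (d : ℝ) / 2 < κ) (hC₀ : 0 < C₀) (hr₀ : 0 < r₀)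
    (hvanish : ∀ ξ : EuclideanSpace ℝ (Fin d), ‖ξ‖ ≤ r₀ → ‖𝓕 (⇑φ₀) ξ‖ ≤ C₀ * ‖ξ‖ ^ κ) :
    Integrable (fun ξ : EuclideanSpace ℝ (Fin d) => ‖ξ‖ ^ (2 * γ) * ‖𝓕 (⇑φ₀) ξ‖ ^ 2) := by
  have hcont : Continuous (𝓕 (⇑φ₀)) := by
    rw [← SchwartzMap.fourier_coe]; exact (𝓕 φ₀).continuous
  have hL2 : Integrable (fun ξ => ‖𝓕 (⇑φ₀) ξ‖ ^ 2) := by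
    have := ((𝓕 φ₀).memLp 2 (volume : Measure (EuclideanSpace ℝ (Fin d)))).integrable_norm_pow
      (by norm_num)
    rw [SchwartzMap.fourier_coe] at this
    exact this
  have hmeas : AEStronglyMeasurable
      (fun ξ : EuclideanSpace ℝ (Fin d) => ‖ξ‖ ^ (2 * γ) * ‖𝓕 (⇑φ₀) ξ‖ ^ 2) volume := by
    apply Measurable.aestronglyMeasurable
    have := hcont.measurable
    fun_prop
  have hd' : (1 : ℝ) ≤ d := by exact_mod_cast hd
  have : Nonempty (Fin d) := ⟨⟨0, hd⟩⟩
  rw [← integrableOn_univ, ← Set.union_compl_self (Metric.ball 0 r₀)]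
  refine IntegrableOn.union ?_ ?_
  · refine integrableOn_ball_of_norm_le_rpow (C := C₀ ^ 2) (α := -(2 * γ + 2 * κ)) (by simpa using hd)
      (by rw [finrank_euclideanSpace_fin]; linarith) ?_ hmeas
    filter_upwards [ae_restrict_mem Metric.isOpen_ball.measurableSet,
      ae_restrict_of_ae (Measure.ae_ne volume (0 : EuclideanSpace ℝ (Fin d)))] with x hx hx0
    have hxp : 0 < ‖x‖ := norm_pos_iff.2 hx0
    have h1 := hvanish x (by simpa using (Metric.mem_ball.1 hx).le)
    rw [Real.norm_of_nonneg (by positivity), neg_neg, Real.rpow_add hxp]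
    calc ‖x‖ ^ (2 * γ) * ‖𝓕 (⇑φ₀) x‖ ^ 2 ≤ ‖x‖ ^ (2 * γ) * (C₀ * ‖x‖ ^ κ) ^ 2 := by gcongr
      _ = C₀ ^ 2 * (‖x‖ ^ (2 * γ) * ‖x‖ ^ (2 * κ)) := by
        rw [mul_pow, mul_comm 2 κ, Real.rpow_mul hxp.le κ 2, Real.rpow_two]; ring
  · refine Integrable.mono' ((hL2.const_mul (r₀ ^ (2 * γ))).integrableOn (s := (Metric.ball 0 r₀)ᶜ))
      hmeas.restrict ?_
    filter_upwards [ae_restrict_mem Metric.isOpen_ball.measurableSet.compl] with x hx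
    have hx' : r₀ ≤ ‖x‖ := by simpa using hx
    rw [Real.norm_of_nonneg (by positivity)]
    have := Real.rpow_le_rpow_of_nonpos hr₀ hx' (by linarith : 2 * γ ≤ 0)
    gcongr

/-- `H^γ` estimate for the rescaled data
`g(x) = λ^{-4/(ν-1)} φ₀(λ^{-1}δx)` when `γ ≤ -d/2`, assuming the Fourier transform
of `φ₀` vanishes of order `κ > -γ - d/2` at the origin; here `Γ = d/2 - 4/(ν-1)`. -/
theorem stmt13 (d : ℕ) (hd : 1 ≤ d) (ν : ℝ) (hν : 1 < ν) (γ : ℝ)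
    (hγ : γ ≤ -(d : ℝ) / 2) (Γ : ℝ) (hΓ : Γ = (d : ℝ) / 2 - 4 / (ν - 1))
    (φ₀ : 𝓢(EuclideanSpace ℝ (Fin d), ℂ))
    (κ C₀ r₀ : ℝ) (hκ : -γ - (d : ℝ) / 2 < κ) (hC₀ : 0 < C₀) (hr₀ : 0 < r₀)
    (hvanish : ∀ ξ : EuclideanSpace ℝ (Fin d), ‖ξ‖ ≤ r₀ → ‖𝓕 (⇑φ₀) ξ‖ ≤ C₀ * ‖ξ‖ ^ κ) :
    ∃ C > (0 : ℝ), ∀ l δ : ℝ, 0 < l → l ≤ δ → δ ≤ 1 →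
      sobNorm γ (fun x => (l ^ (-(4 / (ν - 1))) : ℝ) • φ₀ ((l⁻¹ * δ) • x)) ≤
        ENNReal.ofReal (C * l ^ (Γ - γ) * δ ^ (γ - (d : ℝ) / 2)) := by
  set F : EuclideanSpace ℝ (Fin d) → ℝ := fun ξ => ‖ξ‖ ^ (2 * γ) * ‖𝓕 (⇑φ₀) ξ‖ ^ 2 with hF
  have hInt : Integrable F := integrable_F d hd γ hγ φ₀ κ C₀ r₀ hκ hC₀ hr₀ hvanish
  have hF0 : ∀ x, 0 ≤ F x := fun x => by simp only [hF]; positivity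
  set K := ∫ x, F x with hK
  have hK0 : 0 ≤ K := integral_nonneg hF0
  refine ⟨√K + 1, by positivity, fun l δ hl hlδ hδ => ?_⟩
  have hδ0 : 0 < δ := hl.trans_le hlδ
  have hd' : (1 : ℝ) ≤ d := by exact_mod_cast hd
  have : Nonempty (Fin d) := ⟨⟨0, hd⟩⟩
  set a := l⁻¹ * δ with ha
  have ha0 : 0 < a := by positivity
  set c := l ^ (-(4 / (ν - 1))) with hc
  have hc0 : 0 < c := by positivity
  set B := (c * (a ^ d)⁻¹) ^ 2 * a ^ (2 * γ) with hB
  have hB0 : 0 ≤ B := by positivity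
  have hkey : (∫⁻ ξ : EuclideanSpace ℝ (Fin d), ENNReal.ofReal ((1 + ‖ξ‖ ^ 2) ^ γ) *
      (‖𝓕 (fun x => c • φ₀ (a • x)) ξ‖₊ : ℝ≥0∞) ^ (2 : ℝ)) ≤ ENNReal.ofReal (B * (a ^ d * K)) := by
    have hI : ∫ ξ, B * F (a⁻¹ • ξ) = B * (a ^ d * K) := by
      rw [integral_const_mul, Measure.integral_comp_inv_smul_of_nonneg _ _ ha0.le,
        finrank_euclideanSpace_fin, smul_eq_mul]
    rw [← hI, ofReal_integral_eq_lintegral_ofReal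
      ((hInt.comp_smul (inv_ne_zero ha0.ne')).const_mul B)
      (Filter.Eventually.of_forall fun x => mul_nonneg hB0 (hF0 _))]
    refine lintegral_mono_ae ?_
    filter_upwards [Measure.ae_ne volume (0 : EuclideanSpace ℝ (Fin d))] with x hx0
    have hxp : 0 < ‖x‖ := norm_pos_iff.2 hx0
    rw [fourier_scale c a ha0, ← enorm_eq_nnnorm, ← ofReal_norm,
      ENNReal.ofReal_rpow_of_nonneg (norm_nonneg _) (by norm_num),
      ← ENNReal.ofReal_mul (by positivity)]
    apply ENNReal.ofReal_le_ofReal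
    rw [norm_smul, Real.norm_of_nonneg (by positivity), Real.rpow_two, mul_pow]
    have h1 : (1 + ‖x‖ ^ 2) ^ γ ≤ a ^ (2 * γ) * ‖a⁻¹ • x‖ ^ (2 * γ) := by
      rw [norm_smul, Real.norm_of_nonneg (by positivity), ← Real.mul_rpow ha0.le (by positivity),
        ← mul_assoc, mul_inv_cancel₀ ha0.ne', one_mul, Real.rpow_mul hxp.le, Real.rpow_two]
      exact Real.rpow_le_rpow_of_nonpos (by positivity) (by linarith) (by linarith)
    calc _ ≤ (a ^ (2 * γ) * ‖a⁻¹ • x‖ ^ (2 * γ)) *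
          ((c * (a ^ d)⁻¹) ^ 2 * ‖𝓕 (⇑φ₀) (a⁻¹ • x)‖ ^ 2) := by gcongr
      _ = B * F (a⁻¹ • x) := by simp only [hB, hF]; ring
  unfold sobNorm
  refine (ENNReal.rpow_le_rpow hkey (by norm_num)).trans ?_
  rw [ENNReal.ofReal_rpow_of_nonneg (by positivity) (by norm_num)]
  apply ENNReal.ofReal_le_ofReal
  rw [← Real.sqrt_eq_rpow]
  have hP : B * a ^ d = (l ^ (Γ - γ) * δ ^ (γ - (d : ℝ) / 2)) ^ 2 := by
    have e1 : l ^ (Γ - γ) * δ ^ (γ - (d : ℝ) / 2) = c * a ^ (γ - (d : ℝ) / 2) := by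
      rw [ha, Real.mul_rpow (by positivity) hδ0.le, Real.inv_rpow hl.le, ← Real.rpow_neg hl.le, hc,
        ← mul_assoc, ← Real.rpow_add hl, hΓ]
      congr 2; ring
    have e2 : (a ^ (γ - (d : ℝ) / 2)) ^ 2 = a ^ (2 * γ) * (a ^ d)⁻¹ := by
      rw [← Real.rpow_natCast a d, ← Real.rpow_neg ha0.le, ← Real.rpow_add ha0, ← Real.rpow_two,
        ← Real.rpow_mul ha0.le]
      congr 1; ring
    clear_value a c
    rw [e1, mul_pow c, e2, hB]
    field_simp
  rw [← mul_assoc, hP, Real.sqrt_mul (by positivity), Real.sqrt_sq (by positivity), mul_comm _ √K,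
    mul_assoc]
  gcongr
  linarith
end

section
/- Let d ≥ 1, let ν ≥ 3 be an odd integer, let μ ∈ {1,-1}, let γ ≥ 0, and let φ₀ be a Schwartz function on ℝ^d that is not identically zero. For t ∈ ℝ define φ^{(0)}(t,x) := φ₀(x) exp(-i μ t |φ₀(x)|^{ν-1}) (a Schwartz function of x for each fixed t). Then there exist constants C ≥ c > 0 and T > 0 such that for all t ≥ T, c t^γ ≤ ‖φ^{(0)}(t,·)‖_{H^γ} ≤ C t^γ. -/
open MeasureTheory Real Complex
open scoped FourierTransform ENNReal SchwartzMap

namespace ZD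

/-- moments -/
noncomputable def Mom {X : Type*} [MeasurableSpace X] (m : Measure X) (w e : X → ℝ) (p : ℝ) : ℝ≥0∞ :=
  ∫⁻ x, ENNReal.ofReal (w x ^ p * e x) ∂m

lemma ptw_upper {w s γ k : ℝ} (hw : 0 < w) (hs : 0 < s) (hγ : 0 ≤ γ) (hk : γ ≤ k) :
    w ^ γ ≤ s ^ γ + s ^ (γ - k) * w ^ k := by
  rcases le_total w s with h | h
  · have := Real.rpow_le_rpow hw.le h hγ
    have : 0 ≤ s ^ (γ - k) * w ^ k := by positivity
    linarith
  · have h1 : w ^ (γ - k) ≤ s ^ (γ - k) :=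
      Real.rpow_le_rpow_of_nonpos hs h (by linarith)
    have h2 : w ^ γ = w ^ (γ - k) * w ^ k := by
      rw [← Real.rpow_add hw]; congr 1; ring
    have : 0 ≤ s ^ γ := by positivity
    have : w ^ (γ - k) * w ^ k ≤ s ^ (γ - k) * w ^ k := by gcongr
    linarith

lemma ptw_lower {w s γ ε R : ℝ} (hw : 0 < w) (hs : 0 < s) (hε : 0 < ε) (hR : 0 < R) :
    w ≤ ε * s + (ε ^ (1 - γ) + R ^ (1 - γ)) * s ^ (1 - γ) * w ^ γ + 1 / (R * s) * w ^ (2 : ℝ) := by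
  have h0 : 0 ≤ ε * s := by positivity
  have h1 : 0 ≤ (ε ^ (1 - γ) + R ^ (1 - γ)) * s ^ (1 - γ) * w ^ γ := by positivity
  have h2 : 0 ≤ 1 / (R * s) * w ^ (2 : ℝ) := by positivity
  rcases le_total w (ε * s) with h | h
  · linarith
  rcases le_total (R * s) w with h' | h'
  · have : w ≤ 1 / (R * s) * w ^ (2 : ℝ) := by
      rw [Real.rpow_two, div_mul_eq_mul_div, le_div_iff₀ (by positivity)]
      nlinarith
    linarith
  · have h3 : w = w ^ (1 - γ) * w ^ γ := by
      rw [← Real.rpow_add hw]; simp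
    have h4 : w ^ (1 - γ) ≤ (ε ^ (1 - γ) + R ^ (1 - γ)) * s ^ (1 - γ) := by
      rw [add_mul, ← Real.mul_rpow hε.le hs.le, ← Real.mul_rpow hR.le hs.le]
      have p1 : 0 ≤ (ε * s) ^ (1 - γ) := by positivity
      have p2 : 0 ≤ (R * s) ^ (1 - γ) := by positivity
      rcases le_total 0 (1 - γ) with hg | hg
      · have := Real.rpow_le_rpow hw.le h' hg
        linarith
      · have := Real.rpow_le_rpow_of_nonpos (by positivity) h hg
        linarith
    have h5 : w ^ (1 - γ) * w ^ γ ≤ (ε ^ (1 - γ) + R ^ (1 - γ)) * s ^ (1 - γ) * w ^ γ := by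
      gcongr
    linarith

section
variable {X : Type*} [MeasurableSpace X] (m : Measure X) {w e : X → ℝ}

lemma mom_upper (hw : ∀ x, 0 < w x) (he : ∀ x, 0 ≤ e x) (hwm : Measurable w) (hem : Measurable e)
    {s γ k : ℝ} (hs : 0 < s) (hγ : 0 ≤ γ) (hk : γ ≤ k) :
    Mom m w e γ ≤ ENNReal.ofReal (s ^ γ) * Mom m w e 0 + ENNReal.ofReal (s ^ (γ - k)) * Mom m w e k := by
  unfold Mom
  rw [← lintegral_const_mul _ (by fun_prop), ← lintegral_const_mul _ (by fun_prop),
    ← lintegral_add_left (by fun_prop)]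
  refine lintegral_mono fun x => ?_
  have := he x
  have := hw x
  rw [← ENNReal.ofReal_mul (by positivity), ← ENNReal.ofReal_mul (by positivity),
    ← ENNReal.ofReal_add (by positivity) (by positivity)]
  refine ENNReal.ofReal_le_ofReal ?_
  have := mul_le_mul_of_nonneg_right (ptw_upper (hw x) hs hγ hk) (he x)
  rw [Real.rpow_zero]
  linarith

lemma mom_lower (hw : ∀ x, 0 < w x) (he : ∀ x, 0 ≤ e x) (hwm : Measurable w) (hem : Measurable e)
    {s γ ε R : ℝ} (hs : 0 < s) (hε : 0 < ε) (hR : 0 < R) :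
    Mom m w e 1 ≤ ENNReal.ofReal (ε * s) * Mom m w e 0
      + ENNReal.ofReal ((ε ^ (1 - γ) + R ^ (1 - γ)) * s ^ (1 - γ)) * Mom m w e γ
      + ENNReal.ofReal (1 / (R * s)) * Mom m w e 2 := by
  unfold Mom
  rw [← lintegral_const_mul _ (by fun_prop), ← lintegral_const_mul _ (by fun_prop),
    ← lintegral_const_mul _ (by fun_prop),
    ← lintegral_add_left (by fun_prop), ← lintegral_add_left (by fun_prop)]
  refine lintegral_mono fun x => ?_
  have := he x
  have := hw x
  rw [← ENNReal.ofReal_mul (by positivity), ← ENNReal.ofReal_mul (by positivity),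
    ← ENNReal.ofReal_mul (by positivity),
    ← ENNReal.ofReal_add (by positivity) (by positivity),
    ← ENNReal.ofReal_add (by positivity) (by positivity)]
  refine ENNReal.ofReal_le_ofReal ?_
  have := mul_le_mul_of_nonneg_right (ptw_lower (γ := γ) (hw x) hs hε hR) (he x)
  rw [Real.rpow_zero, Real.rpow_one]
  linarith

/-- two-sided growth of the moments -/
lemma mom_main (hw : ∀ x, 0 < w x) (hwm : Measurable w)
    {γ k c₁ K : ℝ} (hγ : 0 ≤ γ) (hk : γ ≤ k) (hc₁ : 0 < c₁) (hK : 0 < K) :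
    ∃ c C : ℝ, 0 < c ∧ 0 < C ∧ ∀ (s : ℝ) (e : X → ℝ), 0 < s → (∀ x, 0 ≤ e x) → Measurable e →
      Mom m w e 0 ≤ ENNReal.ofReal K → ENNReal.ofReal (c₁ * s) ≤ Mom m w e 1 →
      Mom m w e 2 ≤ ENNReal.ofReal (K * s ^ 2) → Mom m w e k ≤ ENNReal.ofReal (K * s ^ k) →
      ENNReal.ofReal (c * s ^ γ) ≤ Mom m w e γ ∧ Mom m w e γ ≤ ENNReal.ofReal (C * s ^ γ) := by
  set ε := c₁ / (4 * K) with hεd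
  set R := 4 * K / c₁ with hRd
  have hε : 0 < ε := by positivity
  have hR : 0 < R := by positivity
  set A := ε ^ (1 - γ) + R ^ (1 - γ) with hA
  have hA0 : 0 < A := by positivity
  refine ⟨c₁ / (2 * A), 2 * K, by positivity, by positivity, ?_⟩
  intro s e hs he hem h0 h1 h2 h3
  have hup : Mom m w e γ ≤ ENNReal.ofReal (2 * K * s ^ γ) := by
    refine (mom_upper m hw he hwm hem hs hγ hk).trans ?_
    calc _ ≤ ENNReal.ofReal (s ^ γ) * ENNReal.ofReal K +
          ENNReal.ofReal (s ^ (γ - k)) * ENNReal.ofReal (K * s ^ k) := by gcongr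
      _ = _ := by
        rw [← ENNReal.ofReal_mul (by positivity), ← ENNReal.ofReal_mul (by positivity),
          ← ENNReal.ofReal_add (by positivity) (by positivity)]
        congr 1
        have : s ^ γ = s ^ (γ - k) * s ^ k := by rw [← Real.rpow_add hs]; congr 1; ring
        rw [mul_left_comm, ← this]; ring
  refine ⟨?_, hup⟩
  have hfin : Mom m w e γ ≠ ⊤ := ne_top_of_le_ne_top ENNReal.ofReal_ne_top hup
  obtain ⟨M, hM0, hM⟩ : ∃ M : ℝ, 0 ≤ M ∧ Mom m w e γ = ENNReal.ofReal M :=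
    ⟨(Mom m w e γ).toReal, ENNReal.toReal_nonneg, (ENNReal.ofReal_toReal hfin).symm⟩
  have key := h1.trans (mom_lower m hw he hwm hem (γ := γ) hs hε hR)
  rw [hM] at key ⊢
  have key2 : ENNReal.ofReal (c₁ * s) ≤ ENNReal.ofReal (ε * s) * ENNReal.ofReal K
      + ENNReal.ofReal (A * s ^ (1 - γ)) * ENNReal.ofReal M
      + ENNReal.ofReal (1 / (R * s)) * ENNReal.ofReal (K * s ^ 2) := by
    refine key.trans ?_
    gcongr
  rw [← ENNReal.ofReal_mul (by positivity), ← ENNReal.ofReal_mul (by positivity),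
    ← ENNReal.ofReal_mul (by positivity),
    ← ENNReal.ofReal_add (by positivity) (by positivity),
    ← ENNReal.ofReal_add (by positivity) (by positivity),
    ENNReal.ofReal_le_ofReal_iff (by positivity)] at key2
  refine ENNReal.ofReal_le_ofReal ?_
  have e1 : ε * s * K = c₁ * s / 4 := by rw [hεd]; field_simp
  have e2 : 1 / (R * s) * (K * s ^ 2) = c₁ * s / 4 := by rw [hRd]; field_simp
  rw [e1, e2] at key2
  have h5 : c₁ * s / 2 ≤ A * s ^ (1 - γ) * M := by linarith
  have h6 : s = s ^ γ * s ^ (1 - γ) := by rw [← Real.rpow_add hs]; simp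
  have h7 : 0 < s ^ (1 - γ) := by positivity
  have h8 : c₁ * s ^ γ / 2 ≤ A * M := by
    refine le_of_mul_le_mul_right ?_ h7
    calc c₁ * s ^ γ / 2 * s ^ (1 - γ) = c₁ * (s ^ γ * s ^ (1 - γ)) / 2 := by ring
      _ = c₁ * s / 2 := by rw [← h6]
      _ ≤ _ := by linarith
  rw [div_mul_eq_mul_div, div_le_iff₀ (by positivity)]
  linarith

end
end ZD
namespace ZD
open LineDeriv

lemma temperate_exp (c : ℝ) : Function.HasTemperateGrowth (fun s : ℝ => cexp ((c * s : ℝ) * I)) := by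
  have h : (fun s : ℝ => cexp ((c * s : ℝ) * I)) = fun s : ℝ => cexp ((c * I) * s) := by
    ext s; congr 1; push_cast; ring
  have hd : ∀ n : ℕ, iteratedDeriv n (fun s : ℝ => cexp ((c * I) * s)) =
      fun s : ℝ => (c * I) ^ n * cexp ((c * I) * s) := by
    intro n
    induction n with
    | zero => ext; simp
    | succ n ih =>
      rw [iteratedDeriv_succ, ih]
      ext s
      have h1 : HasDerivAt (fun s : ℝ => (c * I) * (s : ℂ)) (c * I) s := by
        simpa using (Complex.ofRealCLM.hasDerivAt (x := s)).const_mul (c * I : ℂ)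
      have h2 := (h1.cexp.const_mul ((c * I : ℂ) ^ n)).deriv
      rw [h2]; ring
  refine ⟨?_, fun n => ⟨0, |c| ^ n, fun x => ?_⟩⟩
  · exact ((Complex.ofRealCLM.contDiff.comp (contDiff_const.mul contDiff_id)).mul
      contDiff_const).cexp
  rw [norm_iteratedFDeriv_eq_norm_iteratedDeriv, h, hd]
  have : cexp (c * I * x) = cexp ((c * x : ℝ) * I) := by congr 1; push_cast; ring
  simp only [this, norm_mul, norm_pow, Complex.norm_exp_ofReal_mul_I]
  simp

variable {d : ℕ}
local notation "V" => EuclideanSpace ℝ (Fin d)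

/-- the phase -/
noncomputable def ph (κ : ℝ) (g : V → ℝ) (t : ℝ) (x : V) : ℂ := cexp ((κ * t * g x : ℝ) * I)

lemma ph_temp (κ : ℝ) {g : V → ℝ} (hg : g.HasTemperateGrowth) (t : ℝ) :
    (ph κ g t).HasTemperateGrowth := by
  exact (temperate_exp (κ * t)).comp hg

lemma norm_ph (κ : ℝ) (g : V → ℝ) (t : ℝ) (x : V) : ‖ph κ g t x‖ = 1 := by
  rw [ph, Complex.norm_exp_ofReal_mul_I]

/-- multiplication by the phase -/
noncomputable def Em (κ : ℝ) (g : V → ℝ) (t : ℝ) (a : 𝓢(V, ℂ)) : 𝓢(V, ℂ) :=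
  SchwartzMap.smulLeftCLM ℂ (ph κ g t) a

lemma Em_apply (κ : ℝ) {g : V → ℝ} (hg : g.HasTemperateGrowth) (t : ℝ) (a : 𝓢(V, ℂ)) (x : V) :
    Em κ g t a x = ph κ g t x * a x := by
  rw [Em, SchwartzMap.smulLeftCLM_apply_apply (ph_temp κ hg t), smul_eq_mul]

lemma norm_Em (κ : ℝ) {g : V → ℝ} (hg : g.HasTemperateGrowth) (t : ℝ) (a : 𝓢(V, ℂ)) :
    ‖(Em κ g t a).toLp 2‖ = ‖a.toLp 2‖ := by
  rw [SchwartzMap.norm_toLp, SchwartzMap.norm_toLp]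
  congr 1
  refine eLpNorm_congr_norm_ae (Filter.Eventually.of_forall fun x => ?_)
  rw [Em_apply κ hg, norm_mul, norm_ph, one_mul]

/-- the new amplitude created by a derivative -/
noncomputable def Bm (κ : ℝ) (G : 𝓢(V, ℂ)) (m : V) (a : 𝓢(V, ℂ)) : 𝓢(V, ℂ) :=
  SchwartzMap.smulLeftCLM ℂ (⇑((κ * I : ℂ) • ∂_{m} G)) a

lemma Bm_apply (κ : ℝ) (G : 𝓢(V, ℂ)) (m : V) (a : 𝓢(V, ℂ)) (x : V) :
    Bm κ G m a x = κ * I * (fderiv ℝ G x m) * a x := by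
  rw [Bm, SchwartzMap.smulLeftCLM_apply_apply (SchwartzMap.hasTemperateGrowth _), smul_eq_mul]
  simp [SchwartzMap.lineDerivOp_apply_eq_fderiv]

lemma deriv_Em (κ : ℝ) {g : V → ℝ} {G : 𝓢(V, ℂ)} (hG : ∀ x, G x = g x)
    (hg : g.HasTemperateGrowth) (t : ℝ) (a : 𝓢(V, ℂ)) (m : V) :
    ∂_{m} (Em κ g t a) = Em κ g t (∂_{m} a) + t • Em κ g t (Bm κ G m a) := by
  ext x
  have hfun : ⇑(Em κ g t a) = fun x => cexp ((κ * t * I) * G x) * a x := by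
    ext y
    rw [Em_apply κ hg, ph, hG]
    congr 2; push_cast; ring
  have hphx : ph κ g t x = cexp ((κ * t * I) * G x) := by
    rw [ph, hG]; congr 1; push_cast; ring
  have h1 := ((G.hasFDerivAt x).const_mul (κ * t * I : ℂ)).cexp.mul (a.hasFDerivAt x)
  rw [SchwartzMap.lineDerivOp_apply_eq_fderiv, hfun]
  erw [h1.fderiv]
  simp only [_root_.add_apply, _root_.smul_apply, Em_apply κ hg, Bm_apply, hphx,
    SchwartzMap.lineDerivOp_apply_eq_fderiv]
  simp
  ring

/-- admissible families of order `N` -/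
inductive Adm (κ : ℝ) (g : V → ℝ) : ℕ → (ℝ → 𝓢(V, ℂ)) → Prop
  | base (a : 𝓢(V, ℂ)) : Adm κ g 0 (fun t => Em κ g t a)
  | up (N : ℕ) (F : ℝ → 𝓢(V, ℂ)) : Adm κ g N F → Adm κ g (N + 1) F
  | tmul (N : ℕ) (F : ℝ → 𝓢(V, ℂ)) : Adm κ g N F → Adm κ g (N + 1) (fun t => t • F t)
  | smul (N : ℕ) (c : ℝ) (F : ℝ → 𝓢(V, ℂ)) : Adm κ g N F → Adm κ g N (fun t => c • F t)
  | add (N : ℕ) (F H : ℝ → 𝓢(V, ℂ)) : Adm κ g N F → Adm κ g N H → Adm κ g N (fun t => F t + H t)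

lemma Adm.deriv {κ : ℝ} {g : V → ℝ} {G : 𝓢(V, ℂ)} (hG : ∀ x, G x = g x)
    (hg : g.HasTemperateGrowth) (m : V) {N : ℕ} {F : ℝ → 𝓢(V, ℂ)} (h : Adm κ g N F) :
    Adm κ g (N + 1) (fun t => ∂_{m} (F t)) := by
  induction h with
  | base a =>
    simp only [deriv_Em κ hG hg]
    exact .add _ _ _ (.up _ _ (.base _)) (.tmul _ _ (.base _))
  | up N F _ ih => exact .up _ _ ih
  | tmul N F _ ih =>
    simp only [lineDerivOp_smul]
    exact .tmul _ _ ih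
  | smul N c F _ ih =>
    simp only [lineDerivOp_smul]
    exact .smul _ _ _ ih
  | add N F H _ _ ih1 ih2 =>
    simp only [lineDerivOp_add]
    exact .add _ _ _ ih1 ih2

lemma Adm.bound {κ : ℝ} {g : V → ℝ} (hg : g.HasTemperateGrowth) {N : ℕ} {F : ℝ → 𝓢(V, ℂ)}
    (h : Adm κ g N F) : ∃ C : ℝ, 0 ≤ C ∧ ∀ t : ℝ, 1 ≤ t → ‖(F t).toLp 2‖ ≤ C * t ^ N := by
  induction h with
  | base a => exact ⟨‖a.toLp 2‖, norm_nonneg _, fun t _ => by rw [norm_Em κ hg]; simp⟩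
  | up N F _ ih =>
    obtain ⟨C, hC, h⟩ := ih
    refine ⟨C, hC, fun t ht => (h t ht).trans ?_⟩
    gcongr
    simp
  | tmul N F _ ih =>
    obtain ⟨C, hC, h⟩ := ih
    refine ⟨C, hC, fun t ht => ?_⟩
    have : (t • F t).toLp 2 (volume : Measure V) = t • (F t).toLp 2 (volume : Measure V) := by
      exact (SchwartzMap.toLpCLM ℝ ℂ 2 (volume : Measure V)).map_smul t (F t)
    rw [this, norm_smul, Real.norm_of_nonneg (by linarith), pow_succ]
    have := mul_le_mul_of_nonneg_left (h t ht) (by linarith : 0 ≤ t)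
    linarith
  | smul N c F _ ih =>
    obtain ⟨C, hC, h⟩ := ih
    refine ⟨|c| * C, by positivity, fun t ht => ?_⟩
    have : (c • F t).toLp 2 (volume : Measure V) = c • (F t).toLp 2 (volume : Measure V) := by
      exact (SchwartzMap.toLpCLM ℝ ℂ 2 (volume : Measure V)).map_smul c (F t)
    rw [this, norm_smul, Real.norm_eq_abs, mul_assoc]
    exact mul_le_mul_of_nonneg_left (h t ht) (abs_nonneg c)
  | add N F H _ _ ih1 ih2 =>
    obtain ⟨C, hC, h⟩ := ih1
    obtain ⟨C', hC', h'⟩ := ih2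
    refine ⟨C + C', by positivity, fun t ht => ?_⟩
    have : (F t + H t).toLp 2 (volume : Measure V) = (F t).toLp 2 (volume : Measure V) +
        (H t).toLp 2 (volume : Measure V) := by
      exact (SchwartzMap.toLpCLM ℝ ℂ 2 (volume : Measure V)).map_add (F t) (H t)
    rw [this, add_mul]
    exact (norm_add_le _ _).trans (add_le_add (h t ht) (h' t ht))

end ZD
namespace ZD
open LineDeriv
variable {d : ℕ}
local notation "V" => EuclideanSpace ℝ (Fin d)

/-- the weight -/
noncomputable def wt (ξ : V) : ℝ := 1 + ‖ξ‖ ^ 2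

lemma wt_pos (ξ : V) : 0 < wt ξ := by unfold wt; positivity

/-- `1 - Δ/(4π²)` -/
noncomputable def Lop (F : 𝓢(V, ℂ)) : 𝓢(V, ℂ) :=
  F + (-(1 / (4 * π ^ 2)) : ℝ) •
    ∑ i : Fin d, ∂_{EuclideanSpace.basisFun (Fin d) ℝ i} (∂_{EuclideanSpace.basisFun (Fin d) ℝ i} F)

lemma fourier_deriv_apply (F : 𝓢(V, ℂ)) (m ξ : V) :
    𝓕 (∂_{m} F) ξ = (2 * π * I) * (inner ℝ ξ m : ℝ) * 𝓕 F ξ := by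
  rw [SchwartzMap.fourier_lineDerivOp_eq, _root_.smul_apply,
    SchwartzMap.smulLeftCLM_apply_apply (Function.hasTemperateGrowth_inner_left m)]
  simp [mul_assoc]

lemma fourier_Lop (F : 𝓢(V, ℂ)) (ξ : V) : 𝓕 (Lop F) ξ = (wt ξ : ℂ) * 𝓕 F ξ := by
  have h1 : 𝓕 (Lop F) = 𝓕 F + (-(1 / (4 * π ^ 2)) : ℝ) •
    ∑ i : Fin d, 𝓕 (∂_{EuclideanSpace.basisFun (Fin d) ℝ i}
      (∂_{EuclideanSpace.basisFun (Fin d) ℝ i} F)) := by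
    have := (FourierTransform.fourierCLM ℝ 𝓢(V, ℂ)).map_add F ((-(1 / (4 * π ^ 2)) : ℝ) •
    ∑ i : Fin d, ∂_{EuclideanSpace.basisFun (Fin d) ℝ i} (∂_{EuclideanSpace.basisFun (Fin d) ℝ i} F))
    rw [map_smul, map_sum] at this
    exact this
  rw [h1, _root_.add_apply, _root_.smul_apply, _root_.sum_apply]
  simp only [fourier_deriv_apply]
  have h2 : ∀ i : Fin d, (2 * π * I) * (inner ℝ ξ (EuclideanSpace.basisFun (Fin d) ℝ i) : ℝ) *
      ((2 * π * I) * (inner ℝ ξ (EuclideanSpace.basisFun (Fin d) ℝ i) : ℝ) * 𝓕 F ξ)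
      = ((ξ i ^ 2 : ℝ) : ℂ) * (-(4 * π ^ 2) * 𝓕 F ξ) := by
    intro i
    have : inner ℝ ξ (EuclideanSpace.basisFun (Fin d) ℝ i) = ξ i := by
      rw [EuclideanSpace.basisFun_apply, EuclideanSpace.inner_single_right]; simp
    rw [this]
    push_cast
    linear_combination (4 * π ^ 2 * (ξ i : ℂ) ^ 2 * 𝓕 F ξ) * I_sq
  simp only [h2]
  rw [← Finset.sum_mul, ← Complex.ofReal_sum, wt, EuclideanSpace.real_norm_sq_eq]
  rw [Complex.real_smul]
  have hpi : (π : ℂ) ≠ 0 := by exact_mod_cast Real.pi_ne_zero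
  push_cast
  field_simp

lemma fourier_Lop_iter (F : 𝓢(V, ℂ)) (j : ℕ) (ξ : V) :
    𝓕 (Lop^[j] F) ξ = (wt ξ : ℂ) ^ j * 𝓕 F ξ := by
  induction j with
  | zero => simp
  | succ j ih => rw [Function.iterate_succ_apply', fourier_Lop, ih]; ring

lemma Adm.sum {κ : ℝ} {g : V → ℝ} {N : ℕ} {ι : Type*} (s : Finset ι) (F : ι → ℝ → 𝓢(V, ℂ))
    (h0 : Adm κ g N (fun _ => 0))
    (h : ∀ i, Adm κ g N (F i)) : Adm κ g N (fun t => ∑ i ∈ s, F i t) := by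
  classical
  induction s using Finset.induction_on with
  | empty => simpa using h0
  | insert i s hi ih =>
    simp only [Finset.sum_insert hi]
    exact .add _ _ _ (h i) ih

lemma Adm.zero {κ : ℝ} {g : V → ℝ} {N : ℕ} {F : ℝ → 𝓢(V, ℂ)} (h : Adm κ g N F) :
    Adm κ g N (fun _ => 0) := by
  simpa using Adm.smul _ 0 _ h

lemma Adm.Lop {κ : ℝ} {g : V → ℝ} {G : 𝓢(V, ℂ)} (hG : ∀ x, G x = g x)
    (hg : g.HasTemperateGrowth) {N : ℕ} {F : ℝ → 𝓢(V, ℂ)} (h : Adm κ g N F) :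
    Adm κ g (N + 2) (fun t => Lop (F t)) := by
  have h2 : Adm κ g (N + 2) F := .up _ _ (.up _ _ h)
  unfold ZD.Lop
  refine .add _ _ _ h2 (.smul _ _ _ (Adm.sum _ _ h2.zero fun i => ?_))
  exact (h.deriv hG hg _).deriv hG hg _

lemma Adm.Lop_iter {κ : ℝ} {g : V → ℝ} {G : 𝓢(V, ℂ)} (hG : ∀ x, G x = g x)
    (hg : g.HasTemperateGrowth) {F : ℝ → 𝓢(V, ℂ)} (h : Adm κ g 0 F) (j : ℕ) :
    Adm κ g (2 * j) (fun t => ZD.Lop^[j] (F t)) := by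
  induction j with
  | zero => simpa using h
  | succ j ih =>
    simp only [Function.iterate_succ_apply']
    exact ih.Lop hG hg

lemma lint_sq (F : 𝓢(V, ℂ)) : ∫⁻ x, ENNReal.ofReal (‖F x‖ ^ 2) = ENNReal.ofReal (‖F.toLp 2‖ ^ 2) := by
  have hint : Integrable (fun x => ‖F x‖ ^ 2) := by
    exact (F.memLp 2 volume).integrable_norm_pow (by norm_num)
  rw [← ofReal_integral_eq_lintegral_ofReal hint (Filter.Eventually.of_forall fun x => by positivity)]
  congr 1
  rw [SchwartzMap.norm_toLp' (by norm_num) (by norm_num)]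
  have h0 : 0 ≤ ∫ x, ‖F x‖ ^ 2 := integral_nonneg fun x => by positivity
  simp only [ENNReal.toReal_ofNat, Real.rpow_two]
  rw [← Real.rpow_two, ← Real.rpow_mul h0]
  norm_num

lemma plancherel (F : 𝓢(V, ℂ)) :
    ∫⁻ x, ENNReal.ofReal (‖𝓕 F x‖ ^ 2) = ENNReal.ofReal (‖F.toLp 2‖ ^ 2) := by
  rw [lint_sq, SchwartzMap.norm_fourier_toL2_eq]

lemma mom_even (F : 𝓢(V, ℂ)) (j : ℕ) :
    Mom volume (wt (d := d)) (fun ξ => ‖𝓕 F ξ‖ ^ 2) ((2 * j : ℕ) : ℝ)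
      = ENNReal.ofReal (‖(Lop^[j] F).toLp 2‖ ^ 2) := by
  rw [← plancherel, Mom]
  congr 1
  ext ξ
  congr 1
  rw [fourier_Lop_iter, norm_mul, norm_pow, Complex.norm_real, Real.norm_of_nonneg (wt_pos ξ).le,
    Real.rpow_natCast]
  ring

lemma mom_one (F : 𝓢(V, ℂ)) (m : V) :
    ENNReal.ofReal (‖(∂_{m} F).toLp 2‖ ^ 2) ≤ ENNReal.ofReal (4 * π ^ 2 * ‖m‖ ^ 2) *
      Mom volume (wt (d := d)) (fun ξ => ‖𝓕 F ξ‖ ^ 2) 1 := by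
  rw [← plancherel, Mom, ← lintegral_const_mul']
  swap
  · exact ENNReal.ofReal_ne_top
  refine lintegral_mono fun ξ => ?_
  rw [← ENNReal.ofReal_mul (by positivity)]
  refine ENNReal.ofReal_le_ofReal ?_
  rw [fourier_deriv_apply, Real.rpow_one, norm_mul, norm_mul, Complex.norm_real]
  have h1 : ‖(2 * π * I : ℂ)‖ = 2 * π := by
    simp [abs_of_pos Real.pi_pos]
  have h2 : ‖(inner ℝ ξ m : ℝ)‖ ≤ ‖ξ‖ * ‖m‖ := norm_inner_le_norm _ _
  have h3 : ‖ξ‖ ^ 2 ≤ wt ξ := by unfold wt; linarith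
  rw [h1]
  calc (2 * π * ‖(inner ℝ ξ m : ℝ)‖ * ‖𝓕 F ξ‖) ^ 2
      ≤ (2 * π * (‖ξ‖ * ‖m‖) * ‖𝓕 F ξ‖) ^ 2 := by gcongr
    _ = 4 * π ^ 2 * ‖m‖ ^ 2 * (‖ξ‖ ^ 2 * ‖𝓕 F ξ‖ ^ 2) := by ring
    _ ≤ _ := by gcongr

lemma exists_dir (hd : 1 ≤ d) (φ G : 𝓢(V, ℂ)) (hφ : φ ≠ 0) (g : V → ℝ) (hG : ∀ x, G x = g x)
    (hg : g.HasTemperateGrowth)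
    (hg0 : ∀ x, 0 ≤ g x) (hgz : ∀ x, g x = 0 ↔ φ x = 0) (κ : ℝ) (hκ : κ ≠ 0) :
    ∃ m : V, m ≠ 0 ∧ 0 < ‖(Bm κ G m φ).toLp 2‖ := by
  by_contra! hcon
  have hgd : Differentiable ℝ g := hg.1.differentiable (by simp)
  have hGg : ∀ x m, fderiv ℝ G x m = fderiv ℝ g x m := by
    intro x m
    have h1 : ⇑G = fun x => Complex.ofRealCLM (g x) := by ext x; simp [hG]
    have h2 := (Complex.ofRealCLM.hasFDerivAt (x := g x)).comp x (hgd x).hasFDerivAt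
    rw [h1]
    erw [h2.fderiv]
    simp
  have hz : ∀ x, fderiv ℝ g x = 0 := by
    intro x
    by_cases hx : φ x = 0
    · have : IsLocalMin g x := Filter.Eventually.of_forall fun y => by
        rw [(hgz x).2 hx]; exact hg0 y
      exact this.fderiv_eq_zero
    · ext m
      by_cases hm : m = 0
      · simp [hm]
      have h1 := hcon m hm
      have h2 : (Bm κ G m φ).toLp 2 (volume : Measure V) = 0 := norm_le_zero_iff.1 h1
      have h3 : Bm κ G m φ = 0 := by
        apply SchwartzMap.injective_toLp 2 (volume : Measure V)
        simp only [h2]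
        exact ((SchwartzMap.toLpCLM ℝ ℂ 2 (volume : Measure V)).map_zero).symm
      have h4 : Bm κ G m φ x = 0 := by rw [h3]; rfl
      rw [Bm_apply, hGg] at h4
      simpa [hx, hκ] using h4
  have hconst : ∀ x y, g x = g y := is_const_of_fderiv_eq_zero hgd hz
  have : Nonempty (Fin d) := ⟨⟨0, hd⟩⟩
  have hlim := G.tendsto_cocompact
  have hGc : ∀ y, G y = G 0 := fun y => by rw [hG, hG, hconst y 0]
  have hlim2 : Filter.Tendsto (fun _ : V => G 0) (Filter.cocompact V) (nhds 0) :=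
    hlim.congr hGc
  have h0 : G 0 = 0 := tendsto_nhds_unique tendsto_const_nhds hlim2
  apply hφ
  ext x
  have : g x = 0 := by
    have := hGc x
    rw [h0, hG] at this
    exact_mod_cast this
  simpa using (hgz x).1 this

lemma main_mom (hd : 1 ≤ d) (φ G : 𝓢(V, ℂ)) (hφ : φ ≠ 0) (g : V → ℝ) (hG : ∀ x, G x = g x)
    (hg : g.HasTemperateGrowth)
    (hg0 : ∀ x, 0 ≤ g x) (hgz : ∀ x, g x = 0 ↔ φ x = 0) (κ : ℝ) (hκ : κ ≠ 0) (γ : ℝ) (hγ : 0 ≤ γ) :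
    ∃ c C T : ℝ, 0 < c ∧ 0 < C ∧ 0 < T ∧ ∀ t : ℝ, T ≤ t →
      ENNReal.ofReal (c * (t ^ 2) ^ γ) ≤
        Mom volume (wt (d := d)) (fun ξ => ‖𝓕 (Em κ g t φ) ξ‖ ^ 2) γ ∧
      Mom volume (wt (d := d)) (fun ξ => ‖𝓕 (Em κ g t φ) ξ‖ ^ 2) γ ≤
        ENNReal.ofReal (C * (t ^ 2) ^ γ) := by
  obtain ⟨m, hm, hB⟩ := exists_dir hd φ G hφ g hG hg hg0 hgz κ hκ
  obtain ⟨j, hj⟩ := exists_nat_ge γ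
  have hj2 : γ ≤ ((2 * j : ℕ) : ℝ) := by push_cast; have : (0:ℝ) ≤ j := by positivity
                                         linarith
  have hadm : ∀ j, Adm κ g (2 * j) (fun t => Lop^[j] (Em κ g t φ)) :=
    fun j => Adm.Lop_iter hG hg (.base φ) j
  obtain ⟨C0, hC0, h0⟩ := (hadm 0).bound hg
  obtain ⟨C1, hC1, h1⟩ := (hadm 1).bound hg
  obtain ⟨C2, hC2, h2⟩ := (hadm j).bound hg
  set b := ‖(Bm κ G m φ).toLp 2‖ with hb
  set a := ‖(∂_{m} φ).toLp 2‖ with ha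
  set K := 1 + C0 ^ 2 + C1 ^ 2 + C2 ^ 2 with hK
  have hm' : 0 < ‖m‖ := norm_pos_iff.2 hm
  have hpi := Real.pi_pos
  set D := 4 * π ^ 2 * ‖m‖ ^ 2 with hD
  have hD0 : 0 < D := by positivity
  obtain ⟨c, C, hc, hC, hmain⟩ := mom_main (volume : Measure V) (w := wt) (wt_pos)
    (by unfold wt; fun_prop) hγ hj2 (c₁ := (b / 2) ^ 2 / D) (K := K) (by positivity) (by positivity)
  refine ⟨c, C, 1 + 2 * a / b, hc, hC, by positivity, fun t ht => ?_⟩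
  have hab : 0 ≤ 2 * a / b := by positivity
  have ht1 : 1 ≤ t := by linarith
  have htab : 2 * a ≤ t * b := by
    rw [← div_le_iff₀ hB]; linarith
  have hev : ∀ (i : ℕ) (Ci : ℝ), 0 ≤ Ci → Ci ^ 2 ≤ K →
      ‖(Lop^[i] (Em κ g t φ)).toLp 2‖ ≤ Ci * t ^ (2 * i) →
      Mom volume (wt (d := d)) (fun ξ => ‖𝓕 (Em κ g t φ) ξ‖ ^ 2) ((2 * i : ℕ) : ℝ)
        ≤ ENNReal.ofReal (K * (t ^ 2) ^ (2 * i)) := by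
    intro i Ci hCi hCK hi
    rw [mom_even]
    refine ENNReal.ofReal_le_ofReal ?_
    calc _ ≤ (Ci * t ^ (2 * i)) ^ 2 := by gcongr
      _ = Ci ^ 2 * (t ^ 2) ^ (2 * i) := by ring
      _ ≤ _ := by gcongr
  refine hmain (t ^ 2) _ (by positivity) (fun x => by positivity) ?_ ?_ ?_ ?_ ?_
  · exact ((SchwartzMap.continuous _).norm.pow 2).measurable
  · have := hev 0 C0 hC0 (by rw [hK]; nlinarith [sq_nonneg C1, sq_nonneg C2]) (h0 t ht1)
    simpa using this
  · have h3 := mom_one (Em κ g t φ) m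
    have h4 : b / 2 * t ≤ ‖(∂_{m} (Em κ g t φ)).toLp 2‖ := by
      have h5 : (∂_{m} (Em κ g t φ)).toLp 2 (volume : Measure V) =
          (Em κ g t (∂_{m} φ)).toLp 2 (volume : Measure V) +
          t • (Em κ g t (Bm κ G m φ)).toLp 2 (volume : Measure V) := by
        rw [deriv_Em κ hG hg]
        have := (SchwartzMap.toLpCLM ℝ ℂ 2 (volume : Measure V)).map_add
          (Em κ g t (∂_{m} φ)) (t • Em κ g t (Bm κ G m φ))
        rw [map_smul] at this
        exact this
      rw [h5]
      have h6 := norm_sub_norm_le (t • (Em κ g t (Bm κ G m φ)).toLp 2 (volume : Measure V))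
        (-(Em κ g t (∂_{m} φ)).toLp 2 (volume : Measure V))
      rw [sub_neg_eq_add, norm_neg, norm_smul, norm_Em κ hg, norm_Em κ hg,
        Real.norm_of_nonneg (by linarith), add_comm] at h6
      rw [← ha, ← hb] at h6
      linarith
    have h7 : ENNReal.ofReal ((b / 2 * t) ^ 2) ≤ ENNReal.ofReal D *
        Mom volume (wt (d := d)) (fun ξ => ‖𝓕 (Em κ g t φ) ξ‖ ^ 2) 1 := by
      refine le_trans (ENNReal.ofReal_le_ofReal ?_) h3
      gcongr
    have h8 : (b / 2) ^ 2 / D * t ^ 2 = (b / 2 * t) ^ 2 / D := by ring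
    rw [h8, ENNReal.ofReal_div_of_pos hD0]
    refine ENNReal.div_le_of_le_mul' h7
  · have := hev 1 C1 hC1 (by rw [hK]; nlinarith [sq_nonneg C0, sq_nonneg C2]) (h1 t ht1)
    simpa using this
  · have := hev j C2 hC2 (by rw [hK]; nlinarith [sq_nonneg C0, sq_nonneg C1]) (h2 t ht1)
    rw [Real.rpow_natCast]
    exact this

end ZD

/-- the `H^γ` norm of the zero-dispersion solution
`φ^{(0)}(t,x) = φ₀(x) exp(-iμt|φ₀(x)|^{ν-1})` grows like `t^γ` for large times. -/
theorem stmt17 (d : ℕ) (hd : 1 ≤ d) (ν : ℕ) (hν : 3 ≤ ν) (hodd : Odd ν)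
    (μ : ℝ) (hμ : μ = 1 ∨ μ = -1) (γ : ℝ) (hγ : 0 ≤ γ)
    (φ₀ : 𝓢(EuclideanSpace ℝ (Fin d), ℂ)) (hφ₀ : φ₀ ≠ 0) :
    ∃ c C T : ℝ, 0 < c ∧ c ≤ C ∧ 0 < T ∧ ∀ t : ℝ, T ≤ t →
      ENNReal.ofReal (c * t ^ γ) ≤
        sobNorm γ (fun x =>
          φ₀ x * Complex.exp (-(μ : ℂ) * Complex.I * (t : ℂ) *
            ((‖φ₀ x‖ ^ (ν - 1) : ℝ) : ℂ))) ∧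
      sobNorm γ (fun x =>
          φ₀ x * Complex.exp (-(μ : ℂ) * Complex.I * (t : ℂ) *
            ((‖φ₀ x‖ ^ (ν - 1) : ℝ) : ℂ))) ≤
        ENNReal.ofReal (C * t ^ γ) := by
  obtain ⟨n, hn⟩ := hodd
  obtain ⟨n, rfl⟩ : ∃ k, n = k + 1 := ⟨n - 1, by omega⟩
  have hν1 : ν - 1 = 2 * (n + 1) := by omega
  set g : EuclideanSpace ℝ (Fin d) → ℝ := fun x => ‖φ₀ x‖ ^ (ν - 1) with hgdef
  have hsq : Function.HasTemperateGrowth (fun x => ‖φ₀ x‖ ^ 2) :=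
    Function.HasTemperateGrowth.comp (g := fun z : ℂ => ‖z‖ ^ 2)
      (Function.hasTemperateGrowth_norm_sq (H := ℂ)) φ₀.hasTemperateGrowth
  have hg : g.HasTemperateGrowth := by
    have : g = fun x => (‖φ₀ x‖ ^ 2) ^ (n + 1) := by
      ext x; rw [hgdef]; simp only [hν1, pow_mul]
    rw [this]
    exact hsq.pow (n + 1)
  have hu : Function.HasTemperateGrowth
      (fun x => (((‖φ₀ x‖ ^ 2) ^ n : ℝ) : ℂ) * Complex.conjCLE (φ₀ x)) := by
    have h1 : Function.HasTemperateGrowth (fun x => (((‖φ₀ x‖ ^ 2) ^ n : ℝ) : ℂ)) :=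
      Function.HasTemperateGrowth.comp (g := Complex.ofReal)
        Complex.ofRealCLM.hasTemperateGrowth (hsq.pow n)
    have h2 : Function.HasTemperateGrowth (fun x => Complex.conjCLE (φ₀ x)) :=
      Complex.conjCLE.hasTemperateGrowth.comp φ₀.hasTemperateGrowth
    exact h1.mul h2
  obtain ⟨G, hG⟩ : ∃ G : 𝓢(EuclideanSpace ℝ (Fin d), ℂ), ∀ x, G x = g x := by
    refine ⟨SchwartzMap.smulLeftCLM ℂ
      (fun x => (((‖φ₀ x‖ ^ 2) ^ n : ℝ) : ℂ) * Complex.conjCLE (φ₀ x)) φ₀, fun x => ?_⟩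
    rw [SchwartzMap.smulLeftCLM_apply_apply hu, smul_eq_mul, mul_assoc]
    have h3 : Complex.conjCLE (φ₀ x) * φ₀ x = ((‖φ₀ x‖ ^ 2 : ℝ) : ℂ) := by
      rw [Complex.conjCLE_apply, Complex.conj_mul']; push_cast; rfl
    rw [h3, ← Complex.ofReal_mul, hgdef]
    simp only [hν1, pow_mul]
    rw [pow_succ (‖φ₀ x‖ ^ 2) n]
  have hκ : -μ ≠ 0 := by rcases hμ with h | h <;> simp [h]
  obtain ⟨c, C, T, hc, hC, hT, h⟩ := ZD.main_mom hd φ₀ G hφ₀ g hG hg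
    (fun x => by positivity) (fun x => by simp [hgdef, hν1]) (-μ) hκ γ hγ
  have hsob : ∀ t : ℝ, sobNorm γ (fun x =>
          φ₀ x * Complex.exp (-(μ : ℂ) * Complex.I * (t : ℂ) *
            ((‖φ₀ x‖ ^ (ν - 1) : ℝ) : ℂ))) =
      (ZD.Mom volume (ZD.wt (d := d)) (fun ξ => ‖𝓕 (ZD.Em (-μ) g t φ₀) ξ‖ ^ 2) γ) ^ ((1 : ℝ) / 2) := by
    intro t
    have h1 : (fun x =>
          φ₀ x * Complex.exp (-(μ : ℂ) * Complex.I * (t : ℂ) *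
            ((‖φ₀ x‖ ^ (ν - 1) : ℝ) : ℂ))) = ⇑(ZD.Em (-μ) g t φ₀) := by
      ext x
      rw [ZD.Em_apply _ hg, mul_comm, ZD.ph]
      congr 2
      rw [hgdef]
      push_cast
      ring
    rw [h1, sobNorm, ← SchwartzMap.fourier_coe, ZD.Mom]
    congr 1
    refine lintegral_congr fun ξ => ?_
    have := ZD.wt_pos ξ
    rw [ENNReal.ofReal_mul (by positivity), ENNReal.ofReal_pow (norm_nonneg _), ofReal_norm,
      ENNReal.rpow_two, ZD.wt]
    rfl
  have hroot : ∀ (a t : ℝ), 0 < a → 0 < t →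
      ENNReal.ofReal (a * (t ^ 2) ^ γ) ^ ((1 : ℝ) / 2) = ENNReal.ofReal (√a * t ^ γ) := by
    intro a t ha ht
    rw [ENNReal.ofReal_rpow_of_nonneg (by positivity) (by norm_num), Real.mul_rpow ha.le (by positivity),
      ← Real.sqrt_eq_rpow, ← Real.rpow_natCast, ← Real.rpow_mul ht.le, ← Real.rpow_mul ht.le]
    congr 3
    push_cast
    ring
  refine ⟨√c, max (√c) (√C), T, Real.sqrt_pos.2 hc, le_max_left _ _, hT, fun t ht => ?_⟩
  have ht0 : 0 < t := hT.trans_le ht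
  obtain ⟨hl, hr⟩ := h t ht
  rw [hsob]
  constructor
  · rw [← hroot c t hc ht0]
    exact ENNReal.rpow_le_rpow hl (by norm_num)
  · refine (ENNReal.rpow_le_rpow hr (by norm_num)).trans ?_
    rw [hroot C t hC ht0]
    refine ENNReal.ofReal_le_ofReal ?_
    gcongr
    exact le_max_right _ _
end
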